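/- arXiv:1412.7817 — 3 statements merged into one kernel-verified Lean document; each statement's English description precedes it below -/
import Mathlib

section
/- Let d be a positive integer and let V and W be nonempty homogeneous varieties in the open unit ball B_d of C^d. Then V and W are biholomorphically equivalent if and only if there exists an invertible linear map A on C^d such that A(W) = V. -/
open Metric

/-- `V` is a homogeneous variety in the open unit ball of `ℂ^d`: the common zero set in the
ball of a set of homogeneous polynomials. -/
def IsHomogeneousVariety (d : ℕ) (V : Set (EuclideanSpace ℂ (Fin d))) : Prop :=
  ∃ S : Set (MvPolynomial (Fin d) ℂ),
    (∀ p ∈ S, ∃ n : ℕ, p.IsHomogeneous n) ∧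
    V = {z : EuclideanSpace ℂ (Fin d) |
          z ∈ ball (0 : EuclideanSpace ℂ (Fin d)) 1 ∧
          ∀ p ∈ S, MvPolynomial.eval (fun i => z i) p = 0}

/-- `V` and `W` are biholomorphically equivalent subsets of the open unit ball of `ℂ^d`. -/
def AreBiholomorphic (d : ℕ) (V W : Set (EuclideanSpace ℂ (Fin d))) : Prop :=
  ∃ F G : EuclideanSpace ℂ (Fin d) → EuclideanSpace ℂ (Fin d),
    DifferentiableOn ℂ F (ball 0 1) ∧ DifferentiableOn ℂ G (ball 0 1) ∧
    F '' V = W ∧ (∀ z ∈ V, G (F z) = z) ∧ (∀ w ∈ W, F (G w) = w)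

section Helpers

variable {E : Type*} [NormedAddCommGroup E] [InnerProductSpace ℂ E]

/-- A complex cone cut by the unit ball. -/
structure BallCone (V : Set E) : Prop where
  zero : (0 : E) ∈ V
  lt : ∀ v ∈ V, ‖v‖ < 1
  smul : ∀ v ∈ V, ∀ c : ℂ, ‖c • v‖ < 1 → c • v ∈ V

/-- Mutually inverse maps between `V` and `W`, holomorphic near each point. -/
structure BiholPair (V W : Set E) (F G : E → E) : Prop where
  dF : ∀ v ∈ V, DifferentiableAt ℂ F v
  dG : ∀ w ∈ W, DifferentiableAt ℂ G w
  mF : ∀ v ∈ V, F v ∈ W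
  mG : ∀ w ∈ W, G w ∈ V
  GF : ∀ v ∈ V, G (F v) = v
  FG : ∀ w ∈ W, F (G w) = w

theorem BiholPair.symm {V W : Set E} {F G : E → E} (h : BiholPair V W F G) :
    BiholPair W V G F := ⟨h.dG, h.dF, h.mG, h.mF, h.FG, h.GF⟩

theorem BiholPair.comp {U V W : Set E} {F G F' G' : E → E} (h : BiholPair U V F G)
    (h' : BiholPair V W F' G') : BiholPair U W (F' ∘ F) (G ∘ G') where
  dF v hv := (h'.dF _ (h.mF v hv)).comp v (h.dF v hv)
  dG v hv := (h.dG _ (h'.mG v hv)).comp v (h'.dG v hv)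
  mF v hv := h'.mF _ (h.mF v hv)
  mG v hv := h.mG _ (h'.mG v hv)
  GF v hv := by simp [h'.GF _ (h.mF v hv), h.GF v hv]
  FG v hv := by simp [h.FG _ (h'.mG v hv), h'.FG v hv]

theorem BallCone.rot {V : Set E} (hV : BallCone V) {c : ℂ} (hc : ‖c‖ = 1) :
    BiholPair V V (fun v => c • v) (fun v => c⁻¹ • v) := by
  have hc0 : c ≠ 0 := by rintro rfl; simp at hc
  refine ⟨fun v _ => by fun_prop, fun v _ => by fun_prop, fun v hv => ?_, fun v hv => ?_,
    fun v _ => ?_, fun v _ => ?_⟩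
  · exact hV.smul v hv _ (by rw [norm_smul, hc, one_mul]; exact hV.lt v hv)
  · exact hV.smul v hv _ (by rw [norm_smul, norm_inv, hc, inv_one, one_mul]; exact hV.lt v hv)
  · simp [smul_smul, hc0]
  · simp [smul_smul, hc0]

theorem schwarz_le {h : ℂ → E} {R : ℝ} (hd : DifferentiableOn ℂ h (ball 0 R))
    (hm : ∀ z ∈ ball (0 : ℂ) R, ‖h z‖ < 1) (h0 : h 0 = 0) {z : ℂ} (hz : z ∈ ball (0 : ℂ) R) :
    ‖h z‖ ≤ ‖z‖ / R := by
  have := Complex.dist_le_div_mul_dist_of_mapsTo_ball (R₂ := 1) hd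
    (fun z hz => by rw [h0]; simpa using (hm z hz).le) hz
  simpa [h0, div_eq_inv_mul] using this

theorem schwarz_eq {h : ℂ → E} {R : ℝ} (hd : DifferentiableOn ℂ h (ball 0 R))
    (hm : ∀ z ∈ ball (0 : ℂ) R, ‖h z‖ < 1) (h0 : h 0 = 0) {z₀ : ℂ}
    (hz₀ : z₀ ∈ ball (0 : ℂ) R) (hne : z₀ ≠ 0) (heq : ‖h z₀‖ = ‖z₀‖ / R) :
    ∀ z ∈ ball (0 : ℂ) R, h z = (z / z₀) • h z₀ := by
  let _ : NormedSpace ℝ E := NormedSpace.restrictScalars ℝ ℂ E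
  let _ : InnerProductSpace ℝ E := InnerProductSpace.rclikeToReal ℂ E
  have hds : dslope h 0 z₀ = z₀⁻¹ • h z₀ := by
    rw [dslope_of_ne _ hne, slope_def_module]; simp [h0]
  have hn : ‖z₀‖ ≠ 0 := by simpa using hne
  have := Complex.affine_of_mapsTo_ball_of_norm_dslope_eq_div (R₂ := 1) hd
    (fun z hz => by rw [h0]; simpa using (hm z hz).le) hz₀
    (by rw [hds, norm_smul, heq, norm_inv]; field_simp)
  intro z hz
  rw [this hz, hds, h0]
  simp [smul_smul, div_eq_mul_inv]

/-- `ζ ↦ H (ζ v)`. -/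
theorem BiholPair.disc {V W : Set E} {F G : E → E} (h : BiholPair V W F G)
    (hV : BallCone V) (hW : BallCone W) {v : E} (hv : v ∈ V) (hv0 : v ≠ 0) :
    DifferentiableOn ℂ (fun ζ : ℂ => F (ζ • v)) (ball 0 (1 / ‖v‖)) ∧
    (∀ z ∈ ball (0 : ℂ) (1 / ‖v‖), ‖F (z • v)‖ < 1) ∧
    (∀ z ∈ ball (0 : ℂ) (1 / ‖v‖), z • v ∈ V) := by
  have hn : 0 < ‖v‖ := norm_pos_iff.2 hv0
  have key : ∀ z ∈ ball (0 : ℂ) (1 / ‖v‖), z • v ∈ V := fun z hz => by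
    apply hV.smul v hv
    rw [norm_smul]
    rwa [mem_ball_zero_iff, lt_div_iff₀ hn] at hz
  refine ⟨fun z hz => ?_, fun z hz => hW.lt _ (h.mF _ (key z hz)), key⟩
  have h1 := h.dF _ (key z hz)
  have h2 : DifferentiableAt ℂ (fun ζ : ℂ => ζ • v) z := by fun_prop
  exact (DifferentiableAt.comp z h1 h2).differentiableWithinAt

theorem BiholPair.norm_le {V W : Set E} {F G : E → E} (h : BiholPair V W F G)
    (hV : BallCone V) (hW : BallCone W) (h0 : F 0 = 0) {v : E} (hv : v ∈ V) : ‖F v‖ ≤ ‖v‖ := by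
  by_cases hv0 : v = 0
  · simp [hv0, h0]
  have hn : 0 < ‖v‖ := norm_pos_iff.2 hv0
  obtain ⟨h1, h2, -⟩ := h.disc hV hW hv hv0
  have := schwarz_le h1 h2 (by simp [h0]) (z := 1)
    (by simpa using (one_lt_inv₀ hn).2 (hV.lt v hv))
  simpa using this

theorem BiholPair.linear {V W : Set E} {F G : E → E} (h : BiholPair V W F G)
    (hV : BallCone V) (hW : BallCone W) (h0 : F 0 = 0) {v : E} (hv : v ∈ V) :
    fderiv ℂ F 0 v = F v := by
  by_cases hv0 : v = 0
  · simp [hv0, h0]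
  have hn : 0 < ‖v‖ := norm_pos_iff.2 hv0
  have hG0 : G 0 = 0 := by have := h.GF 0 hV.zero; rwa [h0] at this
  have heq : ‖F v‖ = ‖v‖ := by
    refine le_antisymm (h.norm_le hV hW h0 hv) ?_
    have := h.symm.norm_le hW hV hG0 (h.mF v hv)
    rwa [h.GF v hv] at this
  obtain ⟨h1, h2, -⟩ := h.disc hV hW hv hv0
  have key := schwarz_eq h1 h2 (by simp [h0]) (z₀ := 1)
    (by simpa using (one_lt_inv₀ hn).2 (hV.lt v hv)) one_ne_zero (by simp [heq])
  simp only [div_one, one_smul] at key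
  have hd1 : HasDerivAt (fun ζ : ℂ => F (ζ • v)) (fderiv ℂ F 0 v) 0 := by
    have hF : HasFDerivAt F (fderiv ℂ F 0) ((0 : ℂ) • v) := by
      rw [zero_smul]; exact (h.dF 0 hV.zero).hasFDerivAt
    have h3 : HasDerivAt (fun ζ : ℂ => ζ • v) v 0 := by
      simpa using (hasDerivAt_id (0 : ℂ)).smul_const v
    exact hF.comp_hasDerivAt (0 : ℂ) h3
  have hd2 : HasDerivAt (fun ζ : ℂ => F (ζ • v)) (F v) 0 := by
    have h3 : HasDerivAt (fun ζ : ℂ => ζ • F v) (F v) 0 := by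
      simpa using (hasDerivAt_id (0 : ℂ)).smul_const (F v)
    refine h3.congr_of_eventuallyEq ?_
    filter_upwards [ball_mem_nhds (0 : ℂ) (show 0 < 1 / ‖v‖ by positivity)] with z hz
    exact key z hz
  exact hd1.unique hd2

/-- The involutive automorphism of the disc exchanging `0` and `r`. -/
noncomputable def mob (r : ℝ) (ζ : ℂ) : ℂ := (r - ζ) / (1 - r * ζ)

theorem mob_den {r : ℝ} (h0 : 0 < r) (h1 : r < 1) {ζ : ℂ} (hζ : ‖ζ‖ < 1) :
    1 - (r : ℂ) * ζ ≠ 0 := by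
  intro h
  have h2 : (r : ℂ) * ζ = 1 := (sub_eq_zero.1 h).symm
  have h3 : r * ‖ζ‖ = 1 := by
    have := congrArg norm h2
    simpa [abs_of_pos h0] using this
  nlinarith [norm_nonneg ζ]

theorem mob_lt {r : ℝ} (h0 : 0 < r) (h1 : r < 1) {ζ : ℂ} (hζ : ‖ζ‖ < 1) : ‖mob r ζ‖ < 1 := by
  have hd := mob_den h0 h1 hζ
  rw [mob, norm_div, div_lt_one (norm_pos_iff.2 hd)]
  rw [← sq_lt_sq₀ (norm_nonneg _) (norm_nonneg _), ← Complex.normSq_eq_norm_sq,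
    ← Complex.normSq_eq_norm_sq]
  have h2 : ζ.re * ζ.re + ζ.im * ζ.im < 1 := by
    rw [← Complex.normSq_apply, Complex.normSq_eq_norm_sq]
    nlinarith [norm_nonneg ζ]
  simp [Complex.normSq_apply]
  nlinarith [mul_pos (sub_pos.2 h2) (show 0 < 1 - r ^ 2 by nlinarith)]

theorem BiholPair.disc_eq {V W : Set E} {F G : E → E} (h : BiholPair V W F G)
    (hV : BallCone V) (hW : BallCone W) (ha : G 0 ≠ 0) :
    ‖F 0‖ ≤ ‖G 0‖ ∧ (‖F 0‖ = ‖G 0‖ → ∀ ζ : ℂ, ‖ζ‖ < 1 →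
      F ((mob ‖G 0‖ ζ / ‖G 0‖) • G 0) = (ζ / ‖G 0‖) • F 0) := by
  set a := G 0 with hadef
  have haV : a ∈ V := h.mG 0 hW.zero
  have hr0 : 0 < ‖a‖ := norm_pos_iff.2 ha
  have hr1 : ‖a‖ < 1 := hV.lt a haV
  set r := ‖a‖ with hr
  have hrC : (r : ℂ) ≠ 0 := by exact_mod_cast hr0.ne'
  obtain ⟨h1, h2, -⟩ := h.disc hV hW haV ha
  have hball : ∀ ζ ∈ ball (0 : ℂ) 1, mob r ζ / r ∈ ball (0 : ℂ) (1 / ‖a‖) := fun ζ hζ => by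
    rw [mem_ball_zero_iff] at hζ ⊢
    rw [norm_div, Complex.norm_real, Real.norm_of_nonneg hr0.le, ← hr]
    have := mob_lt hr0 hr1 hζ
    gcongr
  have d1 : DifferentiableOn ℂ (fun ζ => F ((mob r ζ / r) • a)) (ball 0 1) := by
    refine h1.comp (f := fun ζ => mob r ζ / r) ?_ hball
    unfold mob
    refine DifferentiableOn.div_const (DifferentiableOn.div (by fun_prop) (by fun_prop) ?_) _
    intro ζ hζ
    exact mob_den hr0 hr1 (by simpa using hζ)
  have d2 : ∀ ζ ∈ ball (0 : ℂ) 1, ‖F ((mob r ζ / r) • a)‖ < 1 := fun ζ hζ => h2 _ (hball ζ hζ)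
  have d3 : F ((mob r 0 / r) • a) = 0 := by
    simp only [mob, sub_zero, mul_zero, div_one, div_self hrC, one_smul]
    exact h.FG 0 hW.zero
  have d4 : F ((mob r r / r) • a) = F 0 := by simp [mob]
  have hrb : (r : ℂ) ∈ ball (0 : ℂ) 1 := by
    simpa [abs_of_pos hr0] using hr1
  constructor
  · have := schwarz_le d1 d2 d3 hrb
    simpa [d4, abs_of_pos hr0] using this
  · intro heq ζ hζ
    have := schwarz_eq d1 d2 d3 hrb hrC (by simp [d4, abs_of_pos hr0, heq]) ζ (by simpa using hζ)
    simpa [d4] using this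

theorem exists_mu {r : ℝ} (h0 : 0 < r) (h1 : r < 1) :
    ∃ μ : ℂ, ‖μ‖ = 1 ∧ ‖mob r (μ * r)‖ = r := by
  have hs : 0 ≤ 1 - ((1 + r ^ 2) / 2) ^ 2 := by
    have h2 : r ^ 2 < 1 := by nlinarith
    nlinarith [sq_nonneg r]
  set s := Real.sqrt (1 - ((1 + r ^ 2) / 2) ^ 2) with hsdef
  have hs2 : s ^ 2 = 1 - ((1 + r ^ 2) / 2) ^ 2 := Real.sq_sqrt hs
  let μ : ℂ := ⟨(1 + r ^ 2) / 2, s⟩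
  have hμ : ‖μ‖ = 1 := by
    have : ‖μ‖ ^ 2 = 1 := by
      rw [← Complex.normSq_eq_norm_sq, Complex.normSq_apply]
      simp only [μ]; nlinarith
    nlinarith [norm_nonneg μ]
  refine ⟨μ, hμ, ?_⟩
  have hlt : ‖μ * r‖ < 1 := by simpa [hμ, abs_of_pos h0] using h1
  have hd := mob_den h0 h1 hlt
  rw [mob, norm_div, div_eq_iff (norm_ne_zero_iff.2 hd)]
  rw [← sq_eq_sq₀ (norm_nonneg _) (by positivity), mul_pow, ← Complex.normSq_eq_norm_sq,
    ← Complex.normSq_eq_norm_sq]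
  simp [Complex.normSq_apply, μ]
  linear_combination (r ^ 2 - r ^ 6) * hs2

theorem BiholPair.exists_fix {V W : Set E} {F G : E → E} (h : BiholPair V W F G)
    (hV : BallCone V) (hW : BallCone W) :
    ∃ H K : E → E, BiholPair V W H K ∧ H 0 = 0 := by
  by_cases hb : F 0 = 0
  · exact ⟨F, G, h, hb⟩
  have ha : G 0 ≠ 0 := by
    intro ha
    have := h.FG 0 hW.zero
    rw [ha] at this
    exact hb this
  obtain ⟨hle, hdisc⟩ := h.disc_eq hV hW ha
  have heq := le_antisymm hle (h.symm.disc_eq hW hV hb).1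
  have hdisc := hdisc heq
  have hr0 : 0 < ‖G 0‖ := norm_pos_iff.2 ha
  have hr1 : ‖G 0‖ < 1 := hV.lt _ (h.mG 0 hW.zero)
  set r := ‖G 0‖ with hr
  have hrC : (r : ℂ) ≠ 0 := by exact_mod_cast hr0.ne'
  obtain ⟨μ, hμ, hm⟩ := exists_mu hr0 hr1
  have hm0 : mob r (μ * r) ≠ 0 := by rw [← norm_pos_iff, hm]; exact hr0
  set c : ℂ := r / mob r (μ * r) with hc
  have hc1 : ‖c‖ = 1 := by
    rw [hc, norm_div, hm, Complex.norm_real, Real.norm_of_nonneg hr0.le, div_self hr0.ne']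
  have hlt : ‖μ * r‖ < 1 := by simpa [hμ, abs_of_pos hr0] using hr1
  refine ⟨_, _, (((h.comp (hW.rot hμ)).comp h.symm).comp (hV.rot hc1)).comp h, ?_⟩
  have e1 := hdisc _ hlt
  rw [mul_div_assoc, div_self hrC, mul_one] at e1
  have hmem : (mob r (μ * r) / r) • G 0 ∈ V := by
    apply hV.smul _ (h.mG 0 hW.zero)
    rw [norm_smul, norm_div, hm, Complex.norm_real, Real.norm_of_nonneg hr0.le,
      div_self hr0.ne', one_mul]
    exact hr1
  have e2 : G (μ • F 0) = (mob r (μ * r) / r) • G 0 := by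
    rw [← e1]; exact h.GF _ hmem
  simp only [Function.comp_apply, e2, smul_smul]
  have : c * (mob r (μ * r) / r) = 1 := by rw [hc, div_mul_div_cancel₀ hm0, div_self hrC]
  rw [this, one_smul]
  exact h.FG 0 hW.zero

theorem BiholPair.exists_equiv [FiniteDimensional ℂ E] {V W : Set E} {F G : E → E}
    (h : BiholPair V W F G) (hV : BallCone V) (hW : BallCone W) :
    ∃ A : E ≃ₗ[ℂ] E, A '' W = V := by
  obtain ⟨H, K, hh, h0⟩ := h.exists_fix hV hW
  have hK0 : K 0 = 0 := by have := hh.GF 0 hV.zero; rwa [h0] at this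
  let A : E →ₗ[ℂ] E := (fderiv ℂ H 0 : E →L[ℂ] E)
  let B : E →ₗ[ℂ] E := (fderiv ℂ K 0 : E →L[ℂ] E)
  have hA : ∀ v ∈ V, A v = H v := fun v hv => hh.linear hV hW h0 hv
  have hB : ∀ w ∈ W, B w = K w := fun w hw => hh.symm.linear hW hV hK0 hw
  have hAB : ∀ w ∈ Submodule.span ℂ W, A (B w) = w := by
    intro w hw
    have : Set.EqOn (A ∘ₗ B) (LinearMap.id : E →ₗ[ℂ] E) (Submodule.span ℂ W) := by
      apply LinearMap.eqOn_span
      intro w hw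
      simp [hB w hw, hA _ (hh.mG w hw), hh.FG w hw]
    exact this hw
  let B' : Submodule.span ℂ W →ₗ[ℂ] E := B.domRestrict (Submodule.span ℂ W)
  have hinj : Function.Injective B' := by
    intro x y hxy
    have hxy' : B x = B y := hxy
    apply Subtype.ext
    rw [← hAB x x.2, ← hAB y y.2, hxy']
  obtain ⟨g, hg⟩ := Submodule.exists_linearEquiv_restrict_eq (LinearEquiv.ofInjective B' hinj)
  have hgW : ∀ w ∈ W, g w = K w := by
    intro w hw
    rw [← hB w hw]
    exact (hg ⟨w, Submodule.subset_span hw⟩).symm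
  refine ⟨g, ?_⟩
  ext v
  constructor
  · rintro ⟨w, hw, rfl⟩
    rw [hgW w hw]; exact hh.mG w hw
  · intro hv
    exact ⟨H v, hh.mF v hv, by rw [hgW _ (hh.mF v hv), hh.GF v hv]⟩

theorem eval_smul_homog {d n : ℕ} {p : MvPolynomial (Fin d) ℂ} (hp : p.IsHomogeneous n)
    (c : ℂ) (z : Fin d → ℂ) :
    MvPolynomial.eval (fun i => c * z i) p = c ^ n * MvPolynomial.eval z p := by
  rw [MvPolynomial.eval_eq', MvPolynomial.eval_eq', Finset.mul_sum]
  refine Finset.sum_congr rfl fun m hm => ?_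
  have h1 : ∑ i, m i = n := by
    have := hp (MvPolynomial.mem_support_iff.1 hm)
    rw [← this]
    simp [Finsupp.weight_apply, Finsupp.sum_fintype]
  simp only [mul_pow, Finset.prod_mul_distrib, Finset.prod_pow_eq_pow_sum, h1]
  ring

theorem ballCone_of_variety {d : ℕ} {V : Set (EuclideanSpace ℂ (Fin d))}
    (hV : IsHomogeneousVariety d V) (hne : V.Nonempty) : BallCone V := by
  obtain ⟨S, hS, rfl⟩ := hV
  have hsm : ∀ v ∈ {z : EuclideanSpace ℂ (Fin d) |
          z ∈ ball (0 : EuclideanSpace ℂ (Fin d)) 1 ∧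
          ∀ p ∈ S, MvPolynomial.eval (fun i => z i) p = 0}, ∀ c : ℂ, ‖c • v‖ < 1 → c • v ∈
        {z : EuclideanSpace ℂ (Fin d) |
          z ∈ ball (0 : EuclideanSpace ℂ (Fin d)) 1 ∧
          ∀ p ∈ S, MvPolynomial.eval (fun i => z i) p = 0} := by
    rintro v ⟨hv, hvp⟩ c hc
    refine ⟨by simpa using hc, fun p hp => ?_⟩
    obtain ⟨n, hn⟩ := hS p hp
    have := eval_smul_homog hn c (fun i => v i)
    rw [hvp p hp, mul_zero] at this
    simpa using this
  refine ⟨?_, fun v hv => by simpa using hv.1, hsm⟩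
  obtain ⟨v, hv⟩ := hne
  simpa using hsm v hv 0 (by simp)

end Helpers

/-- Two nonempty homogeneous varieties in the finite-dimensional unit ball are
biholomorphically equivalent if and only if an invertible linear map takes one onto the
other. -/
theorem homogeneous_biholomorphic_iff_linear (d : ℕ) (hd : 0 < d)
    (V W : Set (EuclideanSpace ℂ (Fin d))) (hV : IsHomogeneousVariety d V)
    (hW : IsHomogeneousVariety d W) (hVne : V.Nonempty) (hWne : W.Nonempty) :
    AreBiholomorphic d V W ↔
      ∃ A : EuclideanSpace ℂ (Fin d) ≃ₗ[ℂ] EuclideanSpace ℂ (Fin d), A '' W = V := by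
  have cV := ballCone_of_variety hV hVne
  have cW := ballCone_of_variety hW hWne
  constructor
  · rintro ⟨F, G, hF, hG, hFV, hGF, hFG⟩
    have hp : BiholPair V W F G := by
      refine ⟨fun v hv => ?_, fun w hw => ?_, fun v hv => ?_, fun w hw => ?_, hGF, hFG⟩
      · exact hF.differentiableAt (isOpen_ball.mem_nhds (by simpa using cV.lt v hv))
      · exact hG.differentiableAt (isOpen_ball.mem_nhds (by simpa using cW.lt w hw))
      · rw [← hFV]; exact ⟨v, hv, rfl⟩
      · rw [← hFV] at hw
        obtain ⟨v, hv, rfl⟩ := hw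
        rw [hGF v hv]; exact hv
    exact hp.exists_equiv cV cW
  · rintro ⟨A, rfl⟩
    refine ⟨A.symm, A, ?_, ?_, ?_, by simp, by simp⟩
    · exact (LinearMap.toContinuousLinearMap A.symm.toLinearMap).differentiable.differentiableOn
    · exact (LinearMap.toContinuousLinearMap A.toLinearMap).differentiable.differentiableOn
    · rw [Set.image_image]; simp
end

section
/- Let d be a positive integer and let V and W be nonempty homogeneous varieties in the open unit ball B_d of C^d which are biholomorphically equivalent. Then there exists a biholomorphism of V onto W mapping 0 to 0; that is, there exist holomorphic maps F, G : B_d → C^d with F(V) = W, G ∘ F restricted to V equal to the identity of V, F ∘ G restricted to W equal to the identity of W, and F(0) = 0. -/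
open Metric

set_option linter.unusedSectionVars false

section HomBih

open Filter Topology Set

variable {E : Type*} [NormedAddCommGroup E] [InnerProductSpace ℂ E] [FiniteDimensional ℂ E]
  [StrictConvexSpace ℝ E]

/-- The abstract properties of a homogeneous variety used in the proof. -/
structure IsBallCone (V : Set E) : Prop where
  norm_lt : ∀ z ∈ V, ‖z‖ < 1
  zero_mem : (0 : E) ∈ V
  smul_mem : ∀ z ∈ V, ∀ c : ℂ, ‖c • z‖ < 1 → c • z ∈ V
  lim_mem : ∀ (l : Filter ℕ) [l.NeBot] (u : ℕ → E) (z : E), (∀ k, u k ∈ V) →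
    Tendsto u l (𝓝 z) → ‖z‖ < 1 → z ∈ V

/-- Biholomorphic equivalence, with locally defined extensions only. -/
structure Bih (V W : Set E) (φ ψ : E → E) : Prop where
  diff : ∀ z ∈ V, DifferentiableAt ℂ φ z
  diff' : ∀ w ∈ W, DifferentiableAt ℂ ψ w
  maps : ∀ z ∈ V, φ z ∈ W
  maps' : ∀ w ∈ W, ψ w ∈ V
  left : ∀ z ∈ V, ψ (φ z) = z
  right : ∀ w ∈ W, φ (ψ w) = w

theorem Bih.symm {V W : Set E} {φ ψ : E → E} (h : Bih V W φ ψ) : Bih W V ψ φ :=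
  ⟨h.diff', h.diff, h.maps', h.maps, h.right, h.left⟩

theorem Bih.comp {V W X : Set E} {φ ψ φ' ψ' : E → E} (h : Bih V W φ ψ) (h' : Bih W X φ' ψ') :
    Bih V X (fun z => φ' (φ z)) (fun x => ψ (ψ' x)) where
  diff z hz := (h'.diff _ (h.maps z hz)).comp z (h.diff z hz)
  diff' x hx := (h.diff' _ (h'.maps' x hx)).comp x (h'.diff' x hx)
  maps z hz := h'.maps _ (h.maps z hz)
  maps' x hx := h.maps' _ (h'.maps' x hx)
  left z hz := by rw [h'.left _ (h.maps z hz), h.left z hz]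
  right x hx := by rw [h.right _ (h'.maps' x hx), h'.right x hx]

theorem IsBallCone.rot {V : Set E} (hV : IsBallCone V) {c c' : ℂ} (hc : ‖c‖ = 1)
    (hcc : c * c' = 1) : Bih V V (fun z => c • z) (fun z => c' • z) := by
  have hc' : ‖c'‖ = 1 := by
    have := congrArg norm hcc
    simpa [hc] using this
  refine ⟨fun z _ => by fun_prop, fun z _ => by fun_prop, ?_, ?_, ?_, ?_⟩
  · intro z hz
    exact hV.smul_mem z hz c (by rw [norm_smul, hc, one_mul]; exact hV.norm_lt z hz)
  · intro z hz
    exact hV.smul_mem z hz c' (by rw [norm_smul, hc', one_mul]; exact hV.norm_lt z hz)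
  · intro z _
    simp [smul_smul, mul_comm c' c, hcc]
  · intro z _
    simp [smul_smul, hcc]

/-- Lipschitz estimate for bounded holomorphic functions. -/
theorem lip_aux {f : ℂ → E} {x y : ℂ} {ρ : ℝ} {M : ℝ} (hd : DifferentiableOn ℂ f (ball x ρ))
    (hb : ∀ z ∈ ball x ρ, ‖f z‖ ≤ M) (hy : y ∈ ball x ρ) :
    ‖f y - f x‖ ≤ 2 * M / ρ * ‖y - x‖ := by
  have hρ : 0 < ρ := pos_of_mem_ball hy
  have := Complex.dist_le_div_mul_dist_of_mapsTo_ball (R₂ := 2 * M) hd ?_ hy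
  · simpa [dist_eq_norm] using this
  · intro z hz
    rw [mem_closedBall, dist_eq_norm]
    have h1 := hb z hz
    have h2 := hb x (mem_ball_self hρ)
    have := norm_sub_le (f z) (f x)
    linarith

theorem tlu_aux {l : Filter ℕ} [l.NeBot] {f : ℕ → ℂ → E} {g : ℂ → E} {R : ℝ}
    (hf : ∀ᶠ k in l, DifferentiableOn ℂ (f k) (ball 0 R) ∧ ∀ z ∈ ball (0 : ℂ) R, ‖f k z‖ ≤ 1)
    (hg : ∀ z ∈ ball (0 : ℂ) R, Tendsto (fun k => f k z) l (𝓝 (g z))) :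
    TendstoLocallyUniformlyOn f g l (ball 0 R) := by
  rw [Metric.tendstoLocallyUniformlyOn_iff]
  intro ε hε x hx
  obtain ⟨ρ, hρ, hsub⟩ := Metric.isOpen_iff.1 isOpen_ball x hx
  set δ := min ρ (ρ * ε / 8) with hδ
  have hδ0 : 0 < δ := lt_min hρ (by positivity)
  have key : ∀ᶠ k in l, ∀ y ∈ ball x δ, ‖f k y - f k x‖ ≤ ε / 4 := by
    filter_upwards [hf] with k hk y hy
    have := lip_aux (M := 1) (hk.1.mono hsub) (fun z hz => hk.2 z (hsub hz))
      (ball_subset_ball (min_le_left _ _) hy : y ∈ ball x ρ)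
    refine this.trans ?_
    have h1 : ‖y - x‖ ≤ ρ * ε / 8 := by
      rw [← dist_eq_norm]
      exact (mem_ball.1 hy).le.trans (min_le_right _ _)
    calc 2 * 1 / ρ * ‖y - x‖ ≤ 2 * 1 / ρ * (ρ * ε / 8) := by gcongr
      _ = ε / 4 := by field_simp; norm_num
  refine ⟨ball x δ, mem_nhdsWithin_of_mem_nhds (ball_mem_nhds x hδ0), ?_⟩
  have hx' := Metric.tendsto_nhds.1 (hg x hx) (ε / 4) (by positivity)
  filter_upwards [key, hx'] with k hk hkx y hy
  have hyR : y ∈ ball (0 : ℂ) R := hsub (ball_subset_ball (min_le_left _ _) hy)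
  have hgl : ‖g y - g x‖ ≤ ε / 4 :=
    le_of_tendsto ((hg y hyR).sub (hg x hx)).norm (key.mono fun k hk => hk y hy)
  have h1 := hk y hy
  rw [dist_eq_norm] at hkx
  rw [dist_eq_norm]
  have : g y - f k y = (g y - g x) - (f k x - g x) - (f k y - f k x) := by abel
  rw [this]
  have h2 := norm_sub_le ((g y - g x) - (f k x - g x)) (f k y - f k x)
  have h3 := norm_sub_le (g y - g x) (f k x - g x)
  linarith

theorem rigid_aux {f : ℂ → E} {r : ℝ} (hr : 0 ≤ r) (hr1 : r < 1)
    (hd : ∀ R : ℝ, R * r < 1 → DifferentiableOn ℂ f (ball 0 R))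
    (hb : ∀ R : ℝ, R * r < 1 → ∀ z ∈ ball (0 : ℂ) R, ‖f z‖ ≤ 1) (h0 : f 0 = 0) :
    ‖f 1‖ ≤ r ∧ (‖f 1‖ = r → deriv f 0 = f 1) := by
  set U : Set ℂ := {z | ‖z‖ * r < 1} with hU
  have hUo : IsOpen U := isOpen_lt (by fun_prop) (by fun_prop)
  have hex : ∀ z ∈ U, ∀ s, r < s → ∃ R : ℝ, R * r < 1 ∧ z ∈ ball (0 : ℂ) R ∧ 1 < R * s := by
    intro z hz s hs
    have hs0 : 0 < s := hr.trans_lt hs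
    have h1 : max ‖z‖ (1 / s) * r < 1 := by
      rcases max_cases ‖z‖ (1 / s) with h | h
      · rw [h.1]; exact hz
      · rw [h.1, div_mul_eq_mul_div, one_mul, div_lt_one hs0]; exact hs
    have hcont : ∀ᶠ R in 𝓝[>] (max ‖z‖ (1 / s)), R * r < 1 :=
      mem_nhdsWithin_of_mem_nhds ((isOpen_lt (by fun_prop : Continuous fun R : ℝ => R * r)
        continuous_const).mem_nhds h1)
    obtain ⟨R, hR1, hR2⟩ := (hcont.and self_mem_nhdsWithin).exists
    have hR2 : max ‖z‖ (1 / s) < R := hR2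
    refine ⟨R, hR1, ?_, ?_⟩
    · rw [mem_ball_zero_iff]; exact (le_max_left _ _).trans_lt hR2
    · have := (le_max_right _ _).trans_lt hR2
      rwa [div_lt_iff₀ hs0] at this
  have hdU : DifferentiableOn ℂ f U := by
    intro z hz
    obtain ⟨R, hR, hz', -⟩ := hex z hz (r + 1) (by linarith)
    exact ((hd R hR).differentiableAt (isOpen_ball.mem_nhds hz')).differentiableWithinAt
  have h0U : (0 : ℂ) ∈ U := by simp [hU]
  have h1U : (1 : ℂ) ∈ U := by simpa [hU] using hr1
  have hslope : ∀ z ∈ U, ‖dslope f 0 z‖ ≤ r := by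
    intro z hz
    refine le_of_forall_gt_imp_ge_of_dense fun s hs => ?_
    obtain ⟨R, hR, hz', hRs⟩ := hex z hz s hs
    have hR0 : 0 < R := pos_of_mem_ball hz'
    have := Complex.norm_dslope_le_div_of_mapsTo_ball (R₂ := 1) (hd R hR) ?_ hz'
    · refine this.trans ?_
      rw [div_le_iff₀ hR0]; linarith [mul_comm s R]
    · intro w hw
      rw [h0, mem_closedBall_zero_iff]
      exact hb R hR w hw
  have hs1 : dslope f 0 1 = f 1 := by
    rw [dslope_of_ne _ one_ne_zero, slope_def_module]; simp [h0]
  refine ⟨hs1 ▸ hslope 1 h1U, fun heq => ?_⟩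
  have hconv : IsPreconnected U := by
    apply Convex.isPreconnected
    rcases eq_or_lt_of_le hr with h | h
    · have : U = univ := by ext; simp [hU, ← h]
      rw [this]; exact convex_univ
    · have : U = ball 0 (1 / r) := by
        ext z; simp only [hU, mem_ofPred_eq, mem_ball_zero_iff, lt_div_iff₀ h]
      rw [this]; exact convex_ball _ _
  have := Complex.eqOn_of_isPreconnected_of_isMaxOn_norm hconv hUo
    ((Complex.differentiableOn_dslope (hUo.mem_nhds h0U)).2 hdU) h1U (fun z hz => by
      simp only [mem_ofPred_eq, Function.comp, hs1, heq]; exact hslope z hz)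
  have h2 := this h0U
  simpa [hs1] using h2

theorem ulim_exists (𝒰 : Ultrafilter ℕ) {F : Type*} [NormedAddCommGroup F] [ProperSpace F]
    (u : ℕ → F) (M : ℝ) (h : ∀ᶠ k in (𝒰 : Filter ℕ), ‖u k‖ ≤ M) :
    ∃ x, Tendsto u 𝒰 (𝓝 x) := by
  have := (isCompact_closedBall (0 : F) M).ultrafilter_le_nhds' (𝒰.map u) (by
    rw [Ultrafilter.mem_map]
    filter_upwards [h] with k hk
    simpa using hk)
  obtain ⟨x, -, hx⟩ := this
  exact ⟨x, hx⟩

theorem line_deriv {φ : E → E} (h : DifferentiableAt ℂ φ 0) (z : E) :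
    HasDerivAt (fun c : ℂ => φ (c • z)) (fderiv ℂ φ 0 z) 0 := by
  have h1 : HasDerivAt (fun c : ℂ => c • z) z 0 := by
    simpa using (hasDerivAt_id (0 : ℂ)).smul_const z
  have h2 : HasFDerivAt φ (fderiv ℂ φ 0) ((fun c : ℂ => c • z) 0) := by
    simpa using h.hasFDerivAt
  exact h2.comp_hasDerivAt (0 : ℂ) h1

theorem line_diff {V : Set E} (hV : IsBallCone V) {φ : E → E}
    (hφ : ∀ z ∈ V, DifferentiableAt ℂ φ z) {z : E} (hz : z ∈ V) {c : ℂ} (hc : ‖c • z‖ < 1) :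
    DifferentiableAt ℂ (fun c : ℂ => φ (c • z)) c :=
  (hφ _ (hV.smul_mem z hz c hc)).comp c (by fun_prop : DifferentiableAt ℂ (fun c : ℂ => c • z) c)

/-- Limit form of the Schwarz lemma with rigidity. -/
theorem limit_aux (𝒰 : Ultrafilter ℕ) {V : Set E} (hV : IsBallCone V) {Φ : ℕ → E → E}
    (hΦ : ∀ k, ∀ z ∈ V, DifferentiableAt ℂ (Φ k) z) (hb : ∀ k, ∀ z ∈ V, ‖Φ k z‖ ≤ 1)
    (h0 : Tendsto (fun k => Φ k 0) 𝒰 (𝓝 0)) {u : ℕ → E} (hu : ∀ k, u k ∈ V) {z w : E}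
    (hz : Tendsto u 𝒰 (𝓝 z)) (hz1 : ‖z‖ < 1)
    (hw : Tendsto (fun k => Φ k (u k)) 𝒰 (𝓝 w)) :
    ‖w‖ ≤ ‖z‖ ∧ (‖w‖ = ‖z‖ → Tendsto (fun k => fderiv ℂ (Φ k) 0 (u k)) 𝒰 (𝓝 w)) := by
  have : ProperSpace E := FiniteDimensional.proper ℂ E
  have hev : ∀ R : ℝ, R * ‖z‖ < 1 → ∀ᶠ k in (𝒰 : Filter ℕ), ∀ c ∈ ball (0 : ℂ) R,
      ‖c • u k‖ < 1 := by
    intro R hR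
    have h1 : Tendsto (fun k => R * ‖u k‖) 𝒰 (𝓝 (R * ‖z‖)) := hz.norm.const_mul R
    filter_upwards [h1.eventually (gt_mem_nhds hR)] with k hk c hc
    rw [norm_smul]
    refine lt_of_le_of_lt ?_ hk
    have := (mem_ball_zero_iff.1 hc).le
    gcongr
  set f : ℕ → ℂ → E := fun k c => Φ k (c • u k) with hf
  have hfev : ∀ R : ℝ, R * ‖z‖ < 1 → ∀ᶠ k in (𝒰 : Filter ℕ),
      DifferentiableOn ℂ (f k) (ball 0 R) ∧ ∀ c ∈ ball (0 : ℂ) R, ‖f k c‖ ≤ 1 := by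
    intro R hR
    filter_upwards [hev R hR] with k hk
    exact ⟨fun c hc => (line_diff hV (hΦ k) (hu k) (hk c hc)).differentiableWithinAt,
      fun c hc => hb k _ (hV.smul_mem _ (hu k) c (hk c hc))⟩
  have hlim : ∀ c : ℂ, ∃ x, (∃ R : ℝ, R * ‖z‖ < 1 ∧ c ∈ ball (0 : ℂ) R) →
      Tendsto (fun k => f k c) 𝒰 (𝓝 x) := by
    intro c
    by_cases h : ∃ R : ℝ, R * ‖z‖ < 1 ∧ c ∈ ball (0 : ℂ) R
    · obtain ⟨R, hR, hc⟩ := h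
      obtain ⟨x, hx⟩ := ulim_exists 𝒰 (fun k => f k c) 1 ((hfev R hR).mono fun k hk => hk.2 c hc)
      exact ⟨x, fun _ => hx⟩
    · exact ⟨0, fun h' => absurd h' h⟩
  choose g hg using hlim
  have htl : ∀ R : ℝ, R * ‖z‖ < 1 → TendstoLocallyUniformlyOn f g 𝒰 (ball 0 R) := fun R hR =>
    tlu_aux (hfev R hR) (fun c hc => hg c ⟨R, hR, hc⟩)
  have hgd : ∀ R : ℝ, R * ‖z‖ < 1 → DifferentiableOn ℂ g (ball 0 R) := fun R hR =>
    (htl R hR).differentiableOn ((hfev R hR).mono fun k hk => hk.1) isOpen_ball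
  have hgb : ∀ R : ℝ, R * ‖z‖ < 1 → ∀ c ∈ ball (0 : ℂ) R, ‖g c‖ ≤ 1 := fun R hR c hc =>
    le_of_tendsto (hg c ⟨R, hR, hc⟩).norm ((hfev R hR).mono fun k hk => hk.2 c hc)
  have hg0 : g 0 = 0 := by
    have := hg 0 ⟨1, by simpa using hz1, by simp⟩
    simp only [hf, zero_smul] at this
    exact tendsto_nhds_unique this h0
  obtain ⟨R, hR1, hR⟩ : ∃ R : ℝ, 1 < R ∧ R * ‖z‖ < 1 := by
    have hcont : ∀ᶠ R in 𝓝[>] (1 : ℝ), R * ‖z‖ < 1 :=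
      mem_nhdsWithin_of_mem_nhds ((isOpen_lt (by fun_prop : Continuous fun R : ℝ => R * ‖z‖)
        continuous_const).mem_nhds (by simpa using hz1))
    obtain ⟨R, hR1, hR2⟩ := (hcont.and self_mem_nhdsWithin).exists
    exact ⟨R, hR2, hR1⟩
  have hg1 : g 1 = w := by
    have := hg 1 ⟨R, hR, by simpa using hR1⟩
    simp only [hf, one_smul] at this
    exact tendsto_nhds_unique this hw
  have := rigid_aux (norm_nonneg z) hz1 hgd hgb hg0
  rw [hg1] at this
  refine ⟨this.1, fun heq => ?_⟩
  have hder := ((htl R hR).deriv ((hfev R hR).mono fun k hk => hk.1) isOpen_ball).tendsto_at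
    (mem_ball_self (by linarith : (0 : ℝ) < R))
  rw [this.2 heq] at hder
  refine hder.congr fun k => ?_
  exact (line_deriv (hΦ k 0 hV.zero_mem) (u k)).deriv


theorem improve {V W : Set E} (hV : IsBallCone V) (hW : IsBallCone W) {φ ψ : E → E}
    (h : Bih V W φ ψ) {c : ℝ} (hc0 : 0 < c) (hc1 : c < 1) (hbc : ‖φ 0‖ ≤ c) {τ : ℝ} (hτ : 0 < τ)
    (hτ2 : τ ≤ 1 / 2) (hτρ : 2 * τ < 1 / c - 1) :
    ∃ φ' ψ', Bih V W φ' ψ' ∧ ‖φ' 0‖ ≤ (1 - τ) * ‖φ 0‖ + 16 / (1 / c - 1) ^ 2 * τ ^ 2 := by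
  set ρ := 1 / c - 1 with hρdef
  have hρ : 0 < ρ := by linarith
  set b := φ 0 with hb
  have hbW : b ∈ W := h.maps 0 hV.zero_mem
  have hψb : ψ b = 0 := h.left 0 hV.zero_mem
  have hsm : ∀ a ∈ ball (1 : ℂ) ρ, ‖a • b‖ < 1 := by
    intro a ha
    have h1 : ‖a‖ < 1 / c := by
      have h2 : ‖a - 1‖ < ρ := by rw [← dist_eq_norm]; exact ha
      have h3 := norm_add_le (a - 1) 1
      simp only [sub_add_cancel, norm_one] at h3
      linarith
    rw [norm_smul]
    calc ‖a‖ * ‖b‖ ≤ ‖a‖ * c := by gcongr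
      _ < 1 / c * c := by gcongr
      _ = 1 := by field_simp
  have haW : ∀ a ∈ ball (1 : ℂ) ρ, a • b ∈ W := fun a ha => hW.smul_mem b hbW a (hsm a ha)
  have hI := hV.rot (c := Complex.I) (c' := -Complex.I) (by simp) (by simp)
  set g : ℂ → E := fun a => φ (Complex.I • ψ (a • b)) with hg
  have hIV : ∀ a ∈ ball (1 : ℂ) ρ, Complex.I • ψ (a • b) ∈ V := fun a ha =>
    hI.maps _ (h.maps' _ (haW a ha))
  have hk : ∀ a ∈ ball (1 : ℂ) ρ, DifferentiableAt ℂ (fun a : ℂ => ψ (a • b)) a := fun a ha =>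
    line_diff hW h.diff' hbW (hsm a ha)
  have hgd : DifferentiableOn ℂ g (ball 1 ρ) := fun a ha =>
    ((h.diff _ (hIV a ha)).comp a ((hk a ha).const_smul Complex.I)).differentiableWithinAt
  have hgb : ∀ a ∈ ball (1 : ℂ) ρ, ‖g a‖ ≤ 1 := fun a ha =>
    (hW.norm_lt _ (h.maps _ (hIV a ha))).le
  have hg1 : g 1 = b := by
    simp only [hg, one_smul, hψb, smul_zero]; rfl
  have h1m : (1 : ℂ) ∈ ball (1 : ℂ) ρ := mem_ball_self hρ
  have hg' : deriv g 1 = Complex.I • b := by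
    have hkd := (hk 1 h1m).hasDerivAt
    set v := deriv (fun a : ℂ => ψ (a • b)) 1 with hv
    have hφ0 : HasFDerivAt φ (fderiv ℂ φ 0) ((fun a : ℂ => ψ (a • b)) 1) := by
      simpa [hψb] using (h.diff 0 hV.zero_mem).hasFDerivAt
    have e1 := hφ0.comp_hasDerivAt (1 : ℂ) hkd
    have e2 : HasDerivAt (fun a : ℂ => a • b) b 1 := by
      simpa using (hasDerivAt_id (1 : ℂ)).smul_const b
    have e3 : (φ ∘ fun a : ℂ => ψ (a • b)) =ᶠ[𝓝 1] fun a : ℂ => a • b := by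
      filter_upwards [isOpen_ball.mem_nhds h1m] with a ha
      exact h.right _ (haW a ha)
    have e4 : fderiv ℂ φ 0 v = b := (e1.congr_of_eventuallyEq e3.symm).unique e2
    have hφ1 : HasFDerivAt φ (fderiv ℂ φ 0) ((fun a : ℂ => Complex.I • ψ (a • b)) 1) := by
      simpa [hψb] using (h.diff 0 hV.zero_mem).hasFDerivAt
    have e5 := (hφ1.comp_hasDerivAt (1 : ℂ) (hkd.const_smul Complex.I)).deriv
    rw [map_smul, e4] at e5
    exact e5
  have hsl : ∀ a ∈ ball (1 : ℂ) ρ, ‖dslope g 1 a‖ ≤ 2 / ρ := by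
    intro a ha
    refine Complex.norm_dslope_le_div_of_mapsTo_ball hgd ?_ ha
    intro z hz
    rw [mem_closedBall, dist_eq_norm]
    have := norm_sub_le (g z) (g 1)
    have := hgb z hz
    have := hgb 1 h1m
    linarith
  have hsd : DifferentiableOn ℂ (dslope g 1) (ball 1 ρ) :=
    (Complex.differentiableOn_dslope (isOpen_ball.mem_nhds h1m)).2 hgd
  have htay : ∀ a ∈ ball (1 : ℂ) ρ,
      ‖g a - (b + (a - 1) • Complex.I • b)‖ ≤ 4 / ρ ^ 2 * ‖a - 1‖ ^ 2 := by
    intro a ha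
    have h1 := lip_aux hsd hsl ha
    have h2 : g a - (b + (a - 1) • Complex.I • b)
        = (a - 1) • (dslope g 1 a - dslope g 1 1) := by
      rw [smul_sub, sub_smul_dslope, dslope_same, hg', hg1]; abel
    rw [h2, norm_smul]
    calc ‖a - 1‖ * ‖dslope g 1 a - dslope g 1 1‖
        ≤ ‖a - 1‖ * (2 * (2 / ρ) / ρ * ‖a - 1‖) := by gcongr
      _ = 4 / ρ ^ 2 * ‖a - 1‖ ^ 2 := by field_simp; norm_num
  have hnz : (1 - Complex.I * τ : ℂ) ≠ 0 := by
    intro h0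
    have := congrArg Complex.re h0
    simp at this
  have hnz' : (1 + Complex.I * τ : ℂ) ≠ 0 := by
    intro h0
    have := congrArg Complex.re h0
    simp at this
  have hn1 : ‖(1 - Complex.I * τ : ℂ)‖ ^ 2 = 1 + τ ^ 2 := by
    rw [← Complex.normSq_eq_norm_sq, Complex.normSq_apply]; simp; ring
  have hn2 : ‖(1 + Complex.I * τ : ℂ)‖ ^ 2 = 1 + τ ^ 2 := by
    rw [← Complex.normSq_eq_norm_sq, Complex.normSq_apply]; simp; ring
  set a : ℂ := (1 + Complex.I * τ) / (1 - Complex.I * τ) with ha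
  have hanorm : ‖a‖ = 1 := by
    have : ‖a‖ ^ 2 = 1 := by
      rw [ha, norm_div, div_pow, hn1, hn2]; exact div_self (by positivity)
    nlinarith [norm_nonneg a]
  have hone : 1 ≤ ‖(1 - Complex.I * τ : ℂ)‖ := by
    nlinarith [norm_nonneg (1 - Complex.I * τ : ℂ), sq_nonneg τ]
  have ha1 : ‖a - 1‖ ≤ 2 * τ := by
    have : a - 1 = (2 * Complex.I * τ) / (1 - Complex.I * τ) := by
      rw [ha]; field_simp; ring
    rw [this, norm_div]
    have h3 : ‖(2 * Complex.I * τ : ℂ)‖ = 2 * τ := by simp [abs_of_pos hτ]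
    rw [h3]
    exact div_le_self (by positivity) hone
  have ha2 : ‖1 + (a - 1) * Complex.I‖ ≤ 1 - τ := by
    have : 1 + (a - 1) * Complex.I = (1 - Complex.I * τ - 2 * τ) / (1 - Complex.I * τ) := by
      rw [ha]; field_simp; ring_nf; simp [Complex.I_sq]; ring
    have h4 : ‖(1 - Complex.I * τ - 2 * τ : ℂ)‖ ^ 2 = (1 - 2 * τ) ^ 2 + τ ^ 2 := by
      rw [← Complex.normSq_eq_norm_sq, Complex.normSq_apply]; simp; ring
    rw [this]
    apply le_of_sq_le_sq _ (by linarith)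
    rw [norm_div, div_pow, h4, hn1, div_le_iff₀ (by positivity)]
    nlinarith [mul_pos hτ hτ, mul_pos (mul_pos hτ hτ) hτ, sq_nonneg (τ ^ 2),
      mul_nonneg hτ.le (sub_nonneg.2 hτ2), mul_nonneg (mul_pos hτ hτ).le (sub_nonneg.2 hτ2)]
  have haball : a ∈ ball (1 : ℂ) ρ := by
    rw [mem_ball, dist_eq_norm]; linarith
  have hrot := hW.rot (c := a) (c' := a⁻¹) hanorm (mul_inv_cancel₀ (by
    intro h0; simp [h0] at hanorm))
  refine ⟨_, _, (((h.comp hrot).comp h.symm).comp hI).comp h, ?_⟩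
  have h5 := htay a haball
  have h6 : b + (a - 1) • Complex.I • b = (1 + (a - 1) * Complex.I) • b := by
    rw [add_smul, one_smul, smul_smul]
  rw [h6] at h5
  change ‖g a‖ ≤ _
  have h7 := norm_add_le (g a - (1 + (a - 1) * Complex.I) • b) ((1 + (a - 1) * Complex.I) • b)
  rw [sub_add_cancel] at h7
  refine h7.trans ?_
  rw [add_comm]
  refine add_le_add ?_ (h5.trans ?_)
  · rw [norm_smul]; gcongr
  · calc 4 / ρ ^ 2 * ‖a - 1‖ ^ 2 ≤ 4 / ρ ^ 2 * (2 * τ) ^ 2 := by gcongr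
      _ = 16 / ρ ^ 2 * τ ^ 2 := by ring

theorem exists_small {V W : Set E} (hV : IsBallCone V) (hW : IsBallCone W) {φ ψ : E → E}
    (h : Bih V W φ ψ) {ε : ℝ} (hε : 0 < ε) : ∃ φ' ψ', Bih V W φ' ψ' ∧ ‖φ' 0‖ < ε := by
  set S : Set ℝ := {x | ∃ φ' ψ', Bih V W φ' ψ' ∧ ‖φ' 0‖ = x} with hS
  have hmem : ‖φ 0‖ ∈ S := ⟨φ, ψ, h, rfl⟩
  have hbdd : BddBelow S := ⟨0, by rintro x ⟨_, _, _, rfl⟩; exact norm_nonneg _⟩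
  set β := sInf S with hβ
  have hβ1 : β ≤ ‖φ 0‖ := csInf_le hbdd hmem
  have hφ1 : ‖φ 0‖ < 1 := hW.norm_lt _ (h.maps _ hV.zero_mem)
  obtain ⟨c, hcφ, hc1⟩ := exists_between hφ1
  have hc0 : 0 < c := (norm_nonneg _).trans_lt hcφ
  have hρ : 0 < 1 / c - 1 := by
    have : 1 < 1 / c := by rw [lt_div_iff₀ hc0]; linarith
    linarith
  set C := 16 / (1 / c - 1) ^ 2 with hC
  have hC0 : 0 < C := by positivity
  have key : ∀ τ : ℝ, 0 < τ → τ ≤ 1 / 2 → 2 * τ < 1 / c - 1 → β ≤ C * τ := by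
    intro τ h0 h1 h2
    have h3 : β ≤ (1 - τ) * β + C * τ ^ 2 := by
      have hlim : Tendsto (fun x : ℝ => (1 - τ) * x + C * τ ^ 2) (𝓝[>] β)
          (𝓝 ((1 - τ) * β + C * τ ^ 2)) :=
        ((by fun_prop : Continuous fun x : ℝ => (1 - τ) * x + C * τ ^ 2).tendsto β).mono_left
          nhdsWithin_le_nhds
      refine ge_of_tendsto hlim ?_
      have hlt : ∀ᶠ y in 𝓝[>] β, y < c :=
        mem_nhdsWithin_of_mem_nhds (gt_mem_nhds (hβ1.trans_lt hcφ))
      filter_upwards [hlt, self_mem_nhdsWithin] with y hyc hy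
      obtain ⟨x, ⟨φ', ψ', h', rfl⟩, hxy⟩ := exists_lt_of_csInf_lt ⟨_, hmem⟩ (show sInf S < y from hy)
      obtain ⟨φ₂, ψ₂, h₂, hle⟩ := improve hV hW h' hc0 hc1 (hxy.trans hyc).le h0 h1 h2
      have h4 : β ≤ ‖φ₂ 0‖ := csInf_le hbdd ⟨φ₂, ψ₂, h₂, rfl⟩
      refine (h4.trans hle).trans ?_
      have : 0 ≤ 1 - τ := by linarith
      gcongr
    have h5 : τ * β ≤ τ * (C * τ) := by nlinarith
    exact le_of_mul_le_mul_left h5 h0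
  have hβ0 : β < ε := by
    set τ := min (1 / 2) (min ((1 / c - 1) / 4) (ε / (2 * C))) with hτ
    have hτ0 : 0 < τ := lt_min (by norm_num) (lt_min (by positivity) (by positivity))
    have t1 : τ ≤ (1 / c - 1) / 4 := (min_le_right _ _).trans (min_le_left _ _)
    have t2 : τ ≤ ε / (2 * C) := (min_le_right _ _).trans (min_le_right _ _)
    have := key τ hτ0 (min_le_left _ _) (by linarith)
    have h6 : C * τ ≤ C * (ε / (2 * C)) := by gcongr
    have h7 : C * (ε / (2 * C)) = ε / 2 := by field_simp
    linarith
  obtain ⟨x, ⟨φ', ψ', h', rfl⟩, hx⟩ := exists_lt_of_csInf_lt ⟨_, hmem⟩ hβ0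
  exact ⟨φ', ψ', h', hx⟩

theorem inv_zero_le {V W : Set E} (hV : IsBallCone V) (hW : IsBallCone W) {φ ψ : E → E}
    (h : Bih V W φ ψ) : ‖ψ 0‖ ≤ 2 * ‖φ 0‖ := by
  set b := φ 0 with hb
  have hbW : b ∈ W := h.maps 0 hV.zero_mem
  have hψb : ψ b = 0 := h.left 0 hV.zero_mem
  rcases eq_or_ne b 0 with h0 | h0
  · rw [h0] at hψb; simp [hψb]
  have hb0 : 0 < ‖b‖ := norm_pos_iff.2 h0
  have hsm : ∀ a ∈ ball (0 : ℂ) (1 / ‖b‖), ‖a • b‖ < 1 := by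
    intro a ha
    rw [mem_ball_zero_iff, lt_div_iff₀ hb0] at ha
    rwa [norm_smul]
  have := lip_aux (f := fun a : ℂ => ψ (a • b)) (x := 0) (y := 1) (ρ := 1 / ‖b‖) (M := 1)
    (fun a ha => (line_diff hW h.diff' hbW (hsm a ha)).differentiableWithinAt)
    (fun a ha => (hV.norm_lt _ (h.maps' _ (hW.smul_mem b hbW a (hsm a ha)))).le)
    (by rw [mem_ball_zero_iff, lt_div_iff₀ hb0]; simpa using hW.norm_lt b hbW)
  simpa [hψb] using this

theorem fderiv_bound {V W : Set E} (hV : IsBallCone V) (hW : IsBallCone W) {φ ψ : E → E}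
    (h : Bih V W φ ψ) {z : E} (hz : z ∈ V) : ‖fderiv ℂ φ 0 z‖ ≤ 2 := by
  have hsm : ∀ a ∈ ball (0 : ℂ) 1, ‖a • z‖ < 1 := by
    intro a ha
    rw [mem_ball_zero_iff] at ha
    rw [norm_smul]
    have := hV.norm_lt z hz
    nlinarith [norm_nonneg z, norm_nonneg a]
  have hb : ∀ a ∈ ball (0 : ℂ) 1, ‖φ (a • z)‖ ≤ 1 := fun a ha =>
    (hW.norm_lt _ (h.maps _ (hV.smul_mem z hz a (hsm a ha)))).le
  rw [← (line_deriv (h.diff 0 hV.zero_mem) z).deriv]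
  have := Complex.norm_deriv_le_div_of_mapsTo_ball (f := fun a : ℂ => φ (a • z)) (c := 0)
    (R₁ := 1) (R₂ := 2)
    (fun a ha => (line_diff hV h.diff hz (hsm a ha)).differentiableWithinAt) (by
      intro a ha
      rw [mem_closedBall, dist_eq_norm]
      have h1 := norm_sub_le (φ (a • z)) (φ ((0 : ℂ) • z))
      have := hb a ha
      have := hb 0 (mem_ball_self one_pos)
      linarith) one_pos
  simpa using this

theorem exists_op_lim (𝒰 : Ultrafilter ℕ) {V W : Set E} (hV : IsBallCone V) (hW : IsBallCone W)
    {φ ψ : ℕ → E → E} (h : ∀ k, Bih V W (φ k) (ψ k)) :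
    ∃ L : E →L[ℂ] E, ∀ (u : ℕ → E) (z : E), (∀ k, u k ∈ V) → Tendsto u 𝒰 (𝓝 z) →
      Tendsto (fun k => fderiv ℂ (φ k) 0 (u k)) 𝒰 (𝓝 (L z)) := by
  have : ProperSpace (E →L[ℂ] E) := FiniteDimensional.proper ℂ _
  set K := Submodule.span ℂ V with hK
  set T : ℕ → E →L[ℂ] E := fun k => (fderiv ℂ (φ k) 0).comp K.starProjection with hT
  have hTV : ∀ k, ∀ z ∈ V, T k z = fderiv ℂ (φ k) 0 z := by
    intro k z hz
    have : K.starProjection z = z :=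
      Submodule.starProjection_eq_self_iff.2 (Submodule.subset_span hz)
    simp [hT, this]
  have hbdK : ∀ x ∈ K, ∃ C, ∀ k, ‖fderiv ℂ (φ k) 0 x‖ ≤ C := by
    intro x hx
    induction hx using Submodule.span_induction with
    | mem x hx => exact ⟨2, fun k => fderiv_bound hV hW (h k) hx⟩
    | zero => exact ⟨0, fun k => by simp⟩
    | add x y _ _ hx hy =>
      obtain ⟨C, hC⟩ := hx
      obtain ⟨D, hD⟩ := hy
      refine ⟨C + D, fun k => ?_⟩
      rw [map_add]
      exact (norm_add_le _ _).trans (add_le_add (hC k) (hD k))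
    | smul a x _ hx =>
      obtain ⟨C, hC⟩ := hx
      refine ⟨‖a‖ * C, fun k => ?_⟩
      rw [map_smul, norm_smul]
      exact mul_le_mul_of_nonneg_left (hC k) (norm_nonneg _)
  have : CompleteSpace E := FiniteDimensional.complete ℂ E
  obtain ⟨C, hC⟩ := banach_steinhaus (g := T) (fun x =>
    hbdK (K.starProjection x) (Submodule.starProjection_apply_mem K x))
  obtain ⟨L, hL⟩ := ulim_exists 𝒰 T C (Eventually.of_forall hC)
  refine ⟨L, fun u z hu hz => ?_⟩
  have := (isBoundedBilinearMap_apply (𝕜 := ℂ) (E := E) (F := E)).continuous.tendsto (L, z)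
    |>.comp (hL.prodMk_nhds hz)
  exact this.congr fun k => hTV k _ (hu k)

theorem exists_linear {V W : Set E} (hV : IsBallCone V) (hW : IsBallCone W) {φ ψ : E → E}
    (h : Bih V W φ ψ) : ∃ L M : E →L[ℂ] E, (∀ z ∈ V, L z ∈ W) ∧ (∀ w ∈ W, M w ∈ V) ∧
      (∀ z ∈ V, M (L z) = z) ∧ (∀ w ∈ W, L (M w) = w) := by
  have : ProperSpace E := FiniteDimensional.proper ℂ E
  have hseq : ∀ k : ℕ, ∃ φ' ψ', Bih V W φ' ψ' ∧ ‖φ' 0‖ < 1 / ((k : ℝ) + 1) := fun k =>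
    exists_small hV hW h (by positivity)
  choose Φ Ψ hB hsmall using hseq
  set 𝒰 : Ultrafilter ℕ := hyperfilter ℕ with h𝒰
  have hle : (𝒰 : Filter ℕ) ≤ atTop := by
    rw [← Nat.cofinite_eq_atTop]; exact hyperfilter_le_cofinite
  have hn0 : Tendsto (fun k => ‖Φ k 0‖) 𝒰 (𝓝 0) :=
    squeeze_zero (fun k => norm_nonneg _) (fun k => (hsmall k).le)
      (tendsto_one_div_add_atTop_nhds_zero_nat.mono_left hle)
  have hΦ0 : Tendsto (fun k => Φ k 0) 𝒰 (𝓝 0) := tendsto_zero_iff_norm_tendsto_zero.2 hn0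
  have hΨ0 : Tendsto (fun k => Ψ k 0) 𝒰 (𝓝 0) :=
    squeeze_zero_norm (fun k => inv_zero_le hV hW (hB k)) (by simpa using hn0.const_mul 2)
  obtain ⟨L, hL⟩ := exists_op_lim 𝒰 hV hW hB
  obtain ⟨M, hM⟩ := exists_op_lim 𝒰 hW hV (fun k => (hB k).symm)
  have main : ∀ {V W : Set E} (_ : IsBallCone V) (_ : IsBallCone W) {Φ Ψ : ℕ → E → E}
      (_ : ∀ k, Bih V W (Φ k) (Ψ k)) (_ : Tendsto (fun k => Φ k 0) 𝒰 (𝓝 0))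
      (_ : Tendsto (fun k => Ψ k 0) 𝒰 (𝓝 0)) {L M : E →L[ℂ] E}
      (_ : ∀ (u : ℕ → E) (z : E), (∀ k, u k ∈ V) → Tendsto u 𝒰 (𝓝 z) →
        Tendsto (fun k => fderiv ℂ (Φ k) 0 (u k)) 𝒰 (𝓝 (L z)))
      (_ : ∀ (u : ℕ → E) (z : E), (∀ k, u k ∈ W) → Tendsto u 𝒰 (𝓝 z) →
        Tendsto (fun k => fderiv ℂ (Ψ k) 0 (u k)) 𝒰 (𝓝 (M z))),
      ∀ z ∈ V, L z ∈ W ∧ M (L z) = z := by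
    intro V W hV hW Φ Ψ hB hΦ0 hΨ0 L M hL hM z hz
    have hz1 := hV.norm_lt z hz
    have hΦb : ∀ k, ∀ z ∈ V, ‖Φ k z‖ ≤ 1 := fun k z hz => (hW.norm_lt _ ((hB k).maps z hz)).le
    have hΨb : ∀ k, ∀ z ∈ W, ‖Ψ k z‖ ≤ 1 := fun k z hz => (hV.norm_lt _ ((hB k).maps' z hz)).le
    obtain ⟨w, hw⟩ := ulim_exists 𝒰 (fun k => Φ k z) 1 (Eventually.of_forall fun k => hΦb k z hz)
    have r1 := limit_aux 𝒰 hV (fun k => (hB k).diff) hΦb hΦ0 (fun _ => hz) tendsto_const_nhds hz1 hw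
    have hw1 : ‖w‖ < 1 := r1.1.trans_lt hz1
    have hΦW : ∀ k, Φ k z ∈ W := fun k => (hB k).maps z hz
    have hwW : w ∈ W := hW.lim_mem 𝒰 _ w hΦW hw hw1
    have r2 := limit_aux (w := z) 𝒰 hW (fun k => (hB k).diff') hΨb hΨ0 hΦW hw hw1
      (tendsto_const_nhds.congr fun k => ((hB k).left z hz).symm)
    have heq : ‖w‖ = ‖z‖ := le_antisymm r1.1 r2.1
    have hLz : L z = w := tendsto_nhds_unique (hL _ z (fun _ => hz) tendsto_const_nhds) (r1.2 heq)
    have hMw : M w = z := tendsto_nhds_unique (hM _ w hΦW hw) (r2.2 heq.symm)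
    rw [hLz]
    exact ⟨hwW, hMw⟩
  have A := main hV hW hB hΦ0 hΨ0 hL hM
  have B := main hW hV (fun k => (hB k).symm) hΨ0 hΦ0 hM hL
  exact ⟨L, M, fun z hz => (A z hz).1, fun w hw => (B w hw).1, fun z hz => (A z hz).2,
    fun w hw => (B w hw).2⟩

theorem eval_smul_aux {d n : ℕ} {p : MvPolynomial (Fin d) ℂ} (hp : p.IsHomogeneous n) (c : ℂ)
    (x : Fin d → ℂ) : MvPolynomial.eval (fun i => c * x i) p = c ^ n * MvPolynomial.eval x p := by
  rw [MvPolynomial.eval_eq, MvPolynomial.eval_eq, Finset.mul_sum]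
  refine Finset.sum_congr rfl fun m hm => ?_
  have h1 : ∏ i ∈ m.support, c ^ m i = c ^ n := by
    rw [Finset.prod_pow_eq_pow_sum]
    congr 1
    have := hp (MvPolynomial.mem_support_iff.1 hm)
    rw [← this, Finsupp.weight_apply, Finsupp.sum]
    simp
  simp only [mul_pow, Finset.prod_mul_distrib, h1]
  ring

theorem IsHomogeneousVariety.isBallCone {d : ℕ} {V : Set (EuclideanSpace ℂ (Fin d))}
    (hV : IsHomogeneousVariety d V) (hne : V.Nonempty) : IsBallCone V := by
  obtain ⟨S, hS, rfl⟩ := hV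
  have hsm : ∀ z : EuclideanSpace ℂ (Fin d), (∀ p ∈ S, MvPolynomial.eval (fun i => z i) p = 0) →
      ∀ c : ℂ, ∀ p ∈ S, MvPolynomial.eval (fun i => (c • z) i) p = 0 := by
    intro z hz c p hp
    obtain ⟨n, hn⟩ := hS p hp
    have := eval_smul_aux hn c (fun i => z i)
    rw [hz p hp, mul_zero] at this
    simpa using this
  refine ⟨?_, ?_, ?_, ?_⟩
  · intro z hz
    exact mem_ball_zero_iff.1 hz.1
  · obtain ⟨z, hz⟩ := hne
    refine ⟨mem_ball_self one_pos, ?_⟩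
    have := hsm z hz.2 0
    simpa only [zero_smul] using this
  · intro z hz c hc
    exact ⟨mem_ball_zero_iff.2 hc, hsm z hz.2 c⟩
  · intro l _ u z hu hz hz1
    refine ⟨mem_ball_zero_iff.2 hz1, fun p hp => ?_⟩
    have hcont : Continuous fun x : EuclideanSpace ℂ (Fin d) =>
        MvPolynomial.eval (fun i => x i) p :=
      (MvPolynomial.continuous_eval p).comp (by fun_prop)
    have h1 := (hcont.tendsto z).comp hz
    refine tendsto_nhds_unique h1 (tendsto_const_nhds.congr fun k => ?_)
    exact ((hu k).2 p hp).symm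

end HomBih

/-- If two nonempty homogeneous varieties in the finite-dimensional unit ball are
biholomorphically equivalent, then they are biholomorphically equivalent via a
biholomorphism fixing the origin. -/
theorem homogeneous_biholomorphic_zero_preserving (d : ℕ) (hd : 0 < d)
    (V W : Set (EuclideanSpace ℂ (Fin d))) (hV : IsHomogeneousVariety d V)
    (hW : IsHomogeneousVariety d W) (hVne : V.Nonempty) (hWne : W.Nonempty)
    (hbih : ∃ F G : EuclideanSpace ℂ (Fin d) → EuclideanSpace ℂ (Fin d),
      DifferentiableOn ℂ F (ball 0 1) ∧ DifferentiableOn ℂ G (ball 0 1) ∧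
      F '' V = W ∧ (∀ z ∈ V, G (F z) = z) ∧ (∀ w ∈ W, F (G w) = w)) :
    ∃ F G : EuclideanSpace ℂ (Fin d) → EuclideanSpace ℂ (Fin d),
      DifferentiableOn ℂ F (ball 0 1) ∧ DifferentiableOn ℂ G (ball 0 1) ∧
      F '' V = W ∧ (∀ z ∈ V, G (F z) = z) ∧ (∀ w ∈ W, F (G w) = w) ∧
      F 0 = 0 := by
  obtain ⟨F, G, hF, hG, hFV, hGF, hFG⟩ := hbih
  have hV' := hV.isBallCone hVne
  have hW' := hW.isBallCone hWne
  have hB : Bih V W F G := by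
    refine ⟨fun z hz => ?_, fun w hw => ?_, fun z hz => ?_, fun w hw => ?_, hGF, hFG⟩
    · exact hF.differentiableAt (isOpen_ball.mem_nhds (mem_ball_zero_iff.2 (hV'.norm_lt z hz)))
    · exact hG.differentiableAt (isOpen_ball.mem_nhds (mem_ball_zero_iff.2 (hW'.norm_lt w hw)))
    · rw [← hFV]; exact Set.mem_image_of_mem F hz
    · rw [← hFV] at hw
      obtain ⟨z, hz, rfl⟩ := hw
      rw [hGF z hz]; exact hz
  obtain ⟨L, M, h1, h2, h3, h4⟩ := exists_linear hV' hW' hB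
  refine ⟨L, M, L.differentiable.differentiableOn, M.differentiable.differentiableOn, ?_, h3, h4,
    map_zero L⟩
  ext w
  constructor
  · rintro ⟨z, hz, rfl⟩
    exact h1 z hz
  · intro hw
    exact ⟨M w, h2 w hw, h4 w hw⟩
end

section
/- Let d be a positive integer and let V and W be nonempty homogeneous varieties in the open unit ball B_d of C^d which are biholomorphically equivalent. Then there exists a linear map A : C^d → C^d such that A(V) = W. -/
open Metric

/-- The Schwarz lemma with its rigidity case, for discs in the Euclidean ball. -/
theorem schwarz_rigid {d : ℕ} {f : ℂ → EuclideanSpace ℂ (Fin d)}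
    (hd : DifferentiableOn ℂ f (ball 0 1)) (hm : ∀ x ∈ ball (0 : ℂ) 1, ‖f x‖ ≤ 1)
    (h0 : f 0 = 0) {x₀ : ℂ} (hx₀ : x₀ ∈ ball (0 : ℂ) 1) (hne : x₀ ≠ 0)
    (heq : ‖f x₀‖ = ‖x₀‖) :
    ∀ x ∈ ball (0 : ℂ) 1, f x = x • (x₀⁻¹ • f x₀) := by
  have hmaps : Set.MapsTo f (ball 0 1) (closedBall (f 0) 1) := by
    intro x hx
    simpa [h0] using hm x hx
  have hs : dslope f 0 x₀ = x₀⁻¹ • f x₀ := by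
    rw [dslope_of_ne _ hne, slope_def_module, h0]
    simp
  have h := Complex.affine_of_mapsTo_ball_of_norm_dslope_eq_div hd hmaps hx₀
    (by
      rw [hs, norm_smul, heq, norm_inv, inv_mul_cancel₀ (norm_ne_zero_iff.mpr hne)]
      simp)
  intro x hx
  have := h hx
  simpa [h0, hs] using this

/-- Invariance of a homogeneous variety under scalings that stay in the ball. -/
theorem hv_smul {d : ℕ} {V : Set (EuclideanSpace ℂ (Fin d))} (hV : IsHomogeneousVariety d V) :
    V ⊆ ball 0 1 ∧ ∀ z ∈ V, ∀ c : ℂ, ‖c • z‖ < 1 → c • z ∈ V := by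
  obtain ⟨S, hS, rfl⟩ := hV
  refine ⟨fun z hz => hz.1, fun z hz c hc => ⟨by simpa using hc, fun p hp => ?_⟩⟩
  obtain ⟨n, hn⟩ := hS p hp
  have key : MvPolynomial.eval (fun i => c * z i) p
      = c ^ n * MvPolynomial.eval (fun i => z i) p := by
    rw [MvPolynomial.eval_eq, MvPolynomial.eval_eq, Finset.mul_sum]
    refine Finset.sum_congr rfl fun m hm => ?_
    have hdeg : ∑ i ∈ m.support, m i = n := by
      have := hn (MvPolynomial.mem_support_iff.mp hm)
      rw [Finsupp.weight_apply] at this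
      simpa [Finsupp.sum] using this
    simp only [mul_pow, Finset.prod_mul_distrib]
    rw [Finset.prod_pow_eq_pow_sum, hdeg]
    ring
  have h2 := hz.2 p hp
  simp only [PiLp.smul_apply, smul_eq_mul]
  rw [key, h2, mul_zero]

/-- Cone condition. -/
def IsBallCone_s2 {d : ℕ} (V : Set (EuclideanSpace ℂ (Fin d))) : Prop :=
  V ⊆ ball 0 1 ∧ ∀ z ∈ V, ∀ c : ℂ, ‖c • z‖ < 1 → c • z ∈ V

theorem IsBallCone_s2.disc {d : ℕ} {V : Set (EuclideanSpace ℂ (Fin d))} (hV : IsBallCone_s2 V)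
    {v : EuclideanSpace ℂ (Fin d)} (hv : v ∈ V) (hne : v ≠ 0) :
    ∀ x ∈ ball (0 : ℂ) 1, x • ((‖v‖ : ℂ)⁻¹ • v) ∈ V := by
  intro x hx
  rw [smul_smul]
  refine hV.2 v hv _ ?_
  have h : ‖v‖ ≠ 0 := norm_ne_zero_iff.mpr hne
  have : ‖x‖ < 1 := by simpa using hx
  simpa [norm_smul, mul_assoc, inv_mul_cancel₀ h] using this

theorem norm_le_of_fix {d : ℕ} {V W : Set (EuclideanSpace ℂ (Fin d))} (hV : IsBallCone_s2 V)
    (hW : IsBallCone_s2 W) {H : EuclideanSpace ℂ (Fin d) → EuclideanSpace ℂ (Fin d)}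
    (hH : ∀ z ∈ V, DifferentiableAt ℂ H z) (hHm : ∀ z ∈ V, H z ∈ W) (h0 : H 0 = 0)
    {v : EuclideanSpace ℂ (Fin d)} (hv : v ∈ V) : ‖H v‖ ≤ ‖v‖ := by
  rcases eq_or_ne v 0 with rfl | hne
  · simp [h0]
  have hdisc := hV.disc hv hne
  have h : (‖v‖ : ℂ) ≠ 0 := by simpa using hne
  have hv1 : ‖v‖ < 1 := by simpa using hV.1 hv
  have := Complex.norm_le_norm_of_mapsTo_ball (f := fun x : ℂ => H (x • ((‖v‖ : ℂ)⁻¹ • v)))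
    (R := 1) (z := (‖v‖ : ℂ))
    (fun x hx => ((hH _ (hdisc x hx)).comp x (by fun_prop)).differentiableWithinAt)
    (fun x hx => ball_subset_closedBall (hW.1 (hHm _ (hdisc x hx)))) (by simp [h0])
    (by simpa using hv1)
  simpa [smul_smul, mul_inv_cancel₀ h] using this

theorem linear_of_fix {d : ℕ} {V W : Set (EuclideanSpace ℂ (Fin d))} (hV : IsBallCone_s2 V)
    (hW : IsBallCone_s2 W) (hVne : V.Nonempty)
    {H K : EuclideanSpace ℂ (Fin d) → EuclideanSpace ℂ (Fin d)}
    (hH : ∀ z ∈ V, DifferentiableAt ℂ H z) (hK : ∀ z ∈ W, DifferentiableAt ℂ K z)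
    (hHm : ∀ z ∈ V, H z ∈ W) (hKm : ∀ z ∈ W, K z ∈ V)
    (hKH : ∀ z ∈ V, K (H z) = z) (hHK : ∀ z ∈ W, H (K z) = z) (h0 : H 0 = 0) :
    ∃ A : EuclideanSpace ℂ (Fin d) →ₗ[ℂ] EuclideanSpace ℂ (Fin d), A '' V = W := by
  obtain ⟨v₀, hv₀⟩ := hVne
  have hV0 : (0 : EuclideanSpace ℂ (Fin d)) ∈ V := by
    simpa using hV.2 v₀ hv₀ 0 (by simp)
  have hK0 : K 0 = 0 := by simpa [h0] using hKH 0 hV0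
  have hlin : ∀ v ∈ V, fderiv ℂ H 0 v = H v := by
    intro v hv
    rcases eq_or_ne v 0 with rfl | hne
    · simp [h0]
    have hnorm : ‖H v‖ = ‖v‖ := by
      refine le_antisymm (norm_le_of_fix hV hW hH hHm h0 hv) ?_
      have := norm_le_of_fix hW hV hK hKm hK0 (hHm v hv)
      rwa [hKH v hv] at this
    have hdisc := hV.disc hv hne
    have h : (‖v‖ : ℂ) ≠ 0 := by simpa using hne
    have hv1 : ‖v‖ < 1 := by simpa using hV.1 hv
    have key := schwarz_rigid (f := fun x : ℂ => H (x • ((‖v‖ : ℂ)⁻¹ • v)))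
      (x₀ := (‖v‖ : ℂ))
      (fun x hx => ((hH _ (hdisc x hx)).comp x (by fun_prop)).differentiableWithinAt)
      (fun x hx => by simpa using ball_subset_closedBall (hW.1 (hHm _ (hdisc x hx))))
      (by simp [h0])
      (by simpa using hv1) h (by simpa [smul_smul, mul_inv_cancel₀ h] using hnorm)
    simp only [smul_inv_smul₀ h] at key
    have hd1 : HasDerivAt (fun x : ℂ => H (x • ((‖v‖ : ℂ)⁻¹ • v)))
        (fderiv ℂ H 0 ((‖v‖ : ℂ)⁻¹ • v)) 0 := by
      have h1 : HasFDerivAt H (fderiv ℂ H 0) ((0 : ℂ) • ((‖v‖ : ℂ)⁻¹ • v)) := by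
        simpa using (hH 0 hV0).hasFDerivAt
      have h2 : HasDerivAt (fun x : ℂ => x • ((‖v‖ : ℂ)⁻¹ • v)) ((‖v‖ : ℂ)⁻¹ • v) 0 := by
        simpa using (hasDerivAt_id (0 : ℂ)).smul_const ((‖v‖ : ℂ)⁻¹ • v)
      exact h1.comp_hasDerivAt 0 h2
    have hd2 : HasDerivAt (fun x : ℂ => H (x • ((‖v‖ : ℂ)⁻¹ • v)))
        ((‖v‖ : ℂ)⁻¹ • H v) 0 := by
      have h2 : HasDerivAt (fun x : ℂ => x • ((‖v‖ : ℂ)⁻¹ • H v)) ((‖v‖ : ℂ)⁻¹ • H v) 0 := by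
        simpa using (hasDerivAt_id (0 : ℂ)).smul_const ((‖v‖ : ℂ)⁻¹ • H v)
      refine h2.congr_of_eventuallyEq ?_
      filter_upwards [ball_mem_nhds (0 : ℂ) one_pos] with x hx using key x hx
    have := hd1.unique hd2
    rw [map_smul] at this
    exact smul_right_injective _ (inv_ne_zero h) this
  refine ⟨(fderiv ℂ H 0 : EuclideanSpace ℂ (Fin d) →ₗ[ℂ] EuclideanSpace ℂ (Fin d)), ?_⟩
  ext w
  constructor
  · rintro ⟨v, hv, rfl⟩
    have := hlin v hv
    simp only [ContinuousLinearMap.coe_coe]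
    rw [this]
    exact hHm v hv
  · intro hw
    refine ⟨K w, hKm w hw, ?_⟩
    simp only [ContinuousLinearMap.coe_coe]
    rw [hlin _ (hKm w hw), hHK w hw]

theorem mob_norm_lt {r : ℝ} (hr0 : 0 ≤ r) (hr1 : r < 1) {x : ℂ} (hx : ‖x‖ < 1) :
    (1 - (r : ℂ) * x) ≠ 0 ∧ ‖((r : ℂ) - x) / (1 - r * x)‖ < 1 := by
  have hne : (1 - (r : ℂ) * x) ≠ 0 := by
    intro h
    have h1 : (r : ℂ) * x = 1 := (sub_eq_zero.mp h).symm
    have h2 : r * ‖x‖ = 1 := by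
      have := congrArg norm h1
      simpa [abs_of_nonneg hr0] using this
    nlinarith [norm_nonneg x]
  refine ⟨hne, ?_⟩
  rw [norm_div, div_lt_one (norm_pos_iff.mpr hne)]
  refine lt_of_pow_lt_pow_left₀ 2 (norm_nonneg _) ?_
  have hx2 : ‖x‖ ^ 2 < 1 := by nlinarith [norm_nonneg x]
  rw [← Complex.normSq_eq_norm_sq, Complex.normSq_apply] at *
  rw [← Complex.normSq_eq_norm_sq, Complex.normSq_apply]
  simp at *
  nlinarith [mul_pos (show (0 : ℝ) < 1 - r ^ 2 by nlinarith) (sub_pos.mpr hx2)]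

theorem mob_mob {r : ℝ} (hr0 : 0 ≤ r) (hr1 : r < 1) {x : ℂ} (hx : ‖x‖ < 1) :
    ((r : ℂ) - ((r : ℂ) - x) / (1 - r * x)) / (1 - r * (((r : ℂ) - x) / (1 - r * x))) = x := by
  obtain ⟨h1, h2⟩ := mob_norm_lt hr0 hr1 hx
  obtain ⟨h3, -⟩ := mob_norm_lt hr0 hr1 h2
  rw [div_eq_iff h3]
  field_simp
  ring

theorem norm_le_of_move {d : ℕ} {V W : Set (EuclideanSpace ℂ (Fin d))} (hV : IsBallCone_s2 V)
    (hW : IsBallCone_s2 W) {F : EuclideanSpace ℂ (Fin d) → EuclideanSpace ℂ (Fin d)}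
    (hF : ∀ z ∈ V, DifferentiableAt ℂ F z) (hFm : ∀ z ∈ V, F z ∈ W)
    {a : EuclideanSpace ℂ (Fin d)} (ha : a ∈ V) (ha0 : a ≠ 0) (hFa : F a = 0) :
    ‖F 0‖ ≤ ‖a‖ ∧ (‖F 0‖ = ‖a‖ → ∀ x : ℂ, ‖x‖ < 1 →
      F (x • ((‖a‖ : ℂ)⁻¹ • a)) =
        (((‖a‖ : ℂ) - x) / (1 - ‖a‖ * x)) • ((‖a‖ : ℂ)⁻¹ • F 0)) := by
  have hdisc := hV.disc ha ha0
  have h : (‖a‖ : ℂ) ≠ 0 := by simpa using ha0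
  have hr1 : ‖a‖ < 1 := by simpa using hV.1 ha
  have hr0 := norm_nonneg a
  have hin : ∀ x ∈ ball (0 : ℂ) 1,
      (((‖a‖ : ℂ) - x) / (1 - ‖a‖ * x)) • ((‖a‖ : ℂ)⁻¹ • a) ∈ V := fun x hx =>
    hdisc _ (by simpa using (mob_norm_lt hr0 hr1 (by simpa using hx)).2)
  have hdiff : DifferentiableOn ℂ
      (fun x : ℂ => F ((((‖a‖ : ℂ) - x) / (1 - ‖a‖ * x)) • ((‖a‖ : ℂ)⁻¹ • a))) (ball 0 1) := by
    intro x hx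
    have hne := (mob_norm_lt hr0 hr1 (x := x) (by simpa using hx)).1
    refine ((hF _ (hin x hx)).comp x ?_).differentiableWithinAt
    refine DifferentiableAt.smul_const ?_ _
    exact DifferentiableAt.div (by fun_prop) (by fun_prop) hne
  have hm : ∀ x ∈ ball (0 : ℂ) 1,
      ‖F ((((‖a‖ : ℂ) - x) / (1 - ‖a‖ * x)) • ((‖a‖ : ℂ)⁻¹ • a))‖ ≤ 1 := fun x hx => by
    simpa using ball_subset_closedBall (hW.1 (hFm _ (hin x hx)))
  have hz : F ((((‖a‖ : ℂ) - 0) / (1 - ‖a‖ * 0)) • ((‖a‖ : ℂ)⁻¹ • a)) = 0 := by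
    simp [smul_smul, mul_inv_cancel₀ h, hFa]
  have hr : F ((((‖a‖ : ℂ) - ‖a‖) / (1 - ‖a‖ * ‖a‖)) • ((‖a‖ : ℂ)⁻¹ • a)) = F 0 := by
    simp
  constructor
  · have := Complex.norm_le_norm_of_mapsTo_ball (R := 1) (z := (‖a‖ : ℂ)) hdiff
      (fun x hx => by simpa using hm x hx) hz (by simpa using hr1)
    rw [hr] at this
    simpa using this
  · intro heq x hx
    have key := schwarz_rigid hdiff hm hz (x₀ := (‖a‖ : ℂ)) (by simpa using hr1) h
      (by rw [hr, heq]; simp)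
    have h2 := (mob_norm_lt hr0 hr1 hx).2
    have := key _ (mem_ball_zero_iff.mpr h2)
    rw [hr, mob_mob hr0 hr1 hx] at this
    exact this

theorem exists_rot {r : ℝ} (hr0 : 0 < r) (hr1 : r < 1) : ∃ c e : ℂ, ‖c‖ = 1 ∧ ‖e‖ = 1 ∧
    c * (((r : ℂ) - e * r) / (1 - r * (e * r))) = r := by
  have hlt : ∀ t : ℝ, ‖Complex.exp (t * Complex.I) * r‖ < 1 := fun t => by
    rw [norm_mul, Complex.norm_exp_ofReal_mul_I]
    simpa [abs_of_pos hr0] using hr1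
  have hcont : Continuous fun t : ℝ =>
      ‖((r : ℂ) - Complex.exp (t * Complex.I) * r) /
        (1 - r * (Complex.exp (t * Complex.I) * r))‖ := by
    refine Continuous.norm (Continuous.div (by fun_prop) (by fun_prop) fun t => ?_)
    exact (mob_norm_lt hr0.le hr1 (hlt t)).1
  have hmem : r ∈ Set.Icc
      ‖((r : ℂ) - Complex.exp ((0 : ℝ) * Complex.I) * r) /
        (1 - r * (Complex.exp ((0 : ℝ) * Complex.I) * r))‖
      ‖((r : ℂ) - Complex.exp (Real.pi * Complex.I) * r) /
        (1 - r * (Complex.exp (Real.pi * Complex.I) * r))‖ := by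
    constructor
    · simp [hr0.le]
    · rw [Complex.exp_pi_mul_I]
      have : ((r : ℂ) - -1 * r) / (1 - r * (-1 * r)) = ((2 * r / (1 + r ^ 2) : ℝ) : ℂ) := by
        push_cast
        ring
      rw [this, Complex.norm_real, Real.norm_of_nonneg (by positivity),
        le_div_iff₀ (by positivity)]
      nlinarith [mul_pos hr0 hr0]
  obtain ⟨t, -, ht⟩ := intermediate_value_Icc Real.pi_pos.le hcont.continuousOn hmem
  simp only at ht
  set m := ((r : ℂ) - Complex.exp (t * Complex.I) * r) /
        (1 - r * (Complex.exp (t * Complex.I) * r)) with hmdef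
  have hm0 : m ≠ 0 := by
    rw [← norm_pos_iff, ht]
    exact hr0
  refine ⟨r / m, Complex.exp (t * Complex.I), ?_, Complex.norm_exp_ofReal_mul_I t, ?_⟩
  · rw [norm_div, ht, Complex.norm_real, Real.norm_of_nonneg hr0.le, div_self hr0.ne']
  · rw [← hmdef, div_mul_cancel₀ _ hm0]

/-- If two nonempty homogeneous varieties in the finite-dimensional unit ball are
biholomorphically equivalent, then a linear map takes one onto the other. -/
theorem homogeneous_biholomorphic_implies_linear (d : ℕ) (hd : 0 < d)
    (V W : Set (EuclideanSpace ℂ (Fin d))) (hV : IsHomogeneousVariety d V)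
    (hW : IsHomogeneousVariety d W) (hVne : V.Nonempty) (hWne : W.Nonempty)
    (hbih : ∃ F G : EuclideanSpace ℂ (Fin d) → EuclideanSpace ℂ (Fin d),
      DifferentiableOn ℂ F (ball 0 1) ∧ DifferentiableOn ℂ G (ball 0 1) ∧
      F '' V = W ∧ (∀ z ∈ V, G (F z) = z) ∧ (∀ w ∈ W, F (G w) = w)) :
    ∃ A : EuclideanSpace ℂ (Fin d) →ₗ[ℂ] EuclideanSpace ℂ (Fin d), A '' V = W := by
  obtain ⟨F, G, hF, hG, himg, hGF, hFG⟩ := hbih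
  have hV' : IsBallCone_s2 V := hv_smul hV
  have hW' : IsBallCone_s2 W := hv_smul hW
  have hF' : ∀ z ∈ V, DifferentiableAt ℂ F z := fun z hz =>
    hF.differentiableAt (isOpen_ball.mem_nhds (hV'.1 hz))
  have hG' : ∀ z ∈ W, DifferentiableAt ℂ G z := fun z hz =>
    hG.differentiableAt (isOpen_ball.mem_nhds (hW'.1 hz))
  have hFm : ∀ z ∈ V, F z ∈ W := fun z hz => himg ▸ Set.mem_image_of_mem F hz
  have hGm : ∀ w ∈ W, G w ∈ V := by
    intro w hw
    rw [← himg] at hw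
    obtain ⟨v, hv, rfl⟩ := hw
    rwa [hGF v hv]
  have hV0 : (0 : EuclideanSpace ℂ (Fin d)) ∈ V := by
    obtain ⟨v, hv⟩ := hVne
    simpa using hV'.2 v hv 0 (by simp)
  have hW0 : (0 : EuclideanSpace ℂ (Fin d)) ∈ W := by
    obtain ⟨v, hv⟩ := hWne
    simpa using hW'.2 v hv 0 (by simp)
  by_cases hF0 : F 0 = 0
  · exact linear_of_fix hV' hW' hVne hF' hG' hFm hGm hGF hFG hF0
  have hG0 : G 0 ≠ 0 := fun h => hF0 (by rw [← h, hFG 0 hW0, h])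
  obtain ⟨h1, -⟩ := norm_le_of_move hV' hW' hF' hFm (hGm 0 hW0) hG0 (hFG 0 hW0)
  obtain ⟨h2, h3⟩ := norm_le_of_move hW' hV' hG' hGm (hFm 0 hV0) hF0 (hGF 0 hV0)
  have heq : ‖F 0‖ = ‖G 0‖ := le_antisymm h1 h2
  have h4 := h3 heq.symm
  have hr0 : 0 < ‖F 0‖ := norm_pos_iff.mpr hF0
  have hr1 : ‖F 0‖ < 1 := by simpa using hW'.1 (hFm 0 hV0)
  obtain ⟨c, e, hc, he, hce⟩ := exists_rot hr0 hr1
  have hrc : (‖F 0‖ : ℂ) ≠ 0 := by simpa using hF0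
  have hc0 : c ≠ 0 := by rintro rfl; simp at hc
  have he0 : e ≠ 0 := by rintro rfl; simp at he
  have rotV : ∀ t : ℂ, ‖t‖ = 1 → ∀ z ∈ V, t • z ∈ V := fun t ht z hz =>
    hV'.2 z hz t (by simpa [norm_smul, ht] using hV'.1 hz)
  have rotW : ∀ t : ℂ, ‖t‖ = 1 → ∀ z ∈ W, t • z ∈ W := fun t ht z hz =>
    hW'.2 z hz t (by simpa [norm_smul, ht] using hW'.1 hz)
  have hci : ‖c⁻¹‖ = 1 := by simp [hc]
  have hei : ‖e⁻¹‖ = 1 := by simp [he]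
  refine linear_of_fix (H := fun z => F (c • G (e • F z)))
    (K := fun w => G (e⁻¹ • F (c⁻¹ • G w))) hV' hW' hVne ?_ ?_ ?_ ?_ ?_ ?_ ?_
  · intro z hz
    have m1 := rotW e he _ (hFm z hz)
    have m2 := rotV c hc _ (hGm _ m1)
    have d1 : DifferentiableAt ℂ (fun z => e • F z) z := (hF' z hz).const_smul e
    have d2 : DifferentiableAt ℂ (fun z => c • G (e • F z)) z :=
      (DifferentiableAt.comp z (hG' _ m1) d1).const_smul c
    exact DifferentiableAt.comp z (hF' _ m2) d2
  · intro z hz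
    have m1 := rotV c⁻¹ hci _ (hGm z hz)
    have m2 := rotW e⁻¹ hei _ (hFm _ m1)
    have d1 : DifferentiableAt ℂ (fun z => c⁻¹ • G z) z := (hG' z hz).const_smul c⁻¹
    have d2 : DifferentiableAt ℂ (fun z => e⁻¹ • F (c⁻¹ • G z)) z :=
      (DifferentiableAt.comp z (hF' _ m1) d1).const_smul e⁻¹
    exact DifferentiableAt.comp z (hG' _ m2) d2
  · intro z hz
    exact hFm _ (rotV c hc _ (hGm _ (rotW e he _ (hFm z hz))))
  · intro z hz
    exact hGm _ (rotW e⁻¹ hei _ (hFm _ (rotV c⁻¹ hci _ (hGm z hz))))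
  · intro z hz
    have m1 := rotW e he _ (hFm z hz)
    have m2 := rotV c hc _ (hGm _ m1)
    rw [hGF _ m2, inv_smul_smul₀ hc0, hFG _ m1, inv_smul_smul₀ he0, hGF z hz]
  · intro z hz
    have m1 := rotV c⁻¹ hci _ (hGm z hz)
    have m2 := rotW e⁻¹ hei _ (hFm _ m1)
    rw [hFG _ m2, smul_inv_smul₀ he0, hGF _ m1, smul_inv_smul₀ hc0, hFG z hz]
  · have h5 := h4 (e * ‖F 0‖) (by simpa [he] using hr1)
    rw [smul_smul, mul_assoc, mul_inv_cancel₀ hrc, mul_one] at h5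
    rw [h5, smul_smul, hce, smul_inv_smul₀ hrc, hFG 0 hW0]
end
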